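/- Let H and H₋₁ be real separable Hilbert spaces with H continuously embedded in H₋₁, and let B^{1/2} : H → H be compact with ‖x‖_{H₋₁} = ‖B^{1/2}x‖_H. If a sequence of probability measures (μₙ) on H satisfies sup_n ∫_H ‖x‖² dμₙ(x) ≤ c for a constant c, then (μₙ), viewed as measures on H₋₁, is tight and has uniformly integrable first moments, hence relatively compact in the 1-Wasserstein space P₁(H₋₁). -/

import Mathlib

open MeasureTheory Filter
open scoped Topology ENNReal

/-- A coupling of two measures: a measure on the product with the prescribed marginals. -/
def IsCoupling {X : Type*} [MeasurableSpace X] (γ : Measure (X × X)) (μ ν : Measure X) : Prop :=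
  γ.map Prod.fst = μ ∧ γ.map Prod.snd = ν

/-- The Wasserstein-type transport distance associated with a cost function `c`, i.e. the
infimum over (finite-cost) couplings `γ` of `μ` and `ν` of `∫ c(x,y) dγ(x,y)`.
With `c = dist` this is the `1`-Wasserstein distance. -/
noncomputable def W1 {X : Type*} [MeasurableSpace X] (c : X → X → ℝ) (μ ν : Measure X) : ℝ :=
  sInf {r | ∃ γ : Measure (X × X), IsCoupling γ μ ν ∧
    Integrable (fun p => c p.1 p.2) γ ∧ r = ∫ p, c p.1 p.2 ∂γ}

/-! A bound on the `p`-th moments, `p > 1`, makes the tails of the first moments decay like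
`R ^ (1 - p)`, and by Markov's inequality it concentrates the measures on balls, whose images under
a compact operator are relatively compact. Prokhorov's theorem then gives a weakly convergent
subsequence, and it remains to see that weak convergence together with uniform integrability
forces convergence in `W1`. Cut the space into countably many small cells with null frontiers for
the limit `ν`, and couple `μ n` with `ν` inside each cell: the mass `∑ₖ min (μ n Aₖ) (ν Aₖ)`
coupled this way tends to `1` and travels a small distance. The remaining mass is coupled
arbitrarily, at a cost of at most `2 R` times that mass plus the first moments beyond radius `R`.
-/

section Coupling

variable {X : Type*} [MeasurableSpace X] {γ γ' : Measure (X × X)} {μ ν μ' ν' : Measure X}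

lemma IsCoupling.add (h : IsCoupling γ μ ν) (h' : IsCoupling γ' μ' ν') :
    IsCoupling (γ + γ') (μ + μ') (ν + ν') :=
  ⟨by rw [Measure.map_add _ _ measurable_fst, h.1, h'.1],
    by rw [Measure.map_add _ _ measurable_snd, h.2, h'.2]⟩

lemma isCoupling_inv_smul_prod [IsFiniteMeasure μ] [IsFiniteMeasure ν]
    (h : μ Set.univ = ν Set.univ) : IsCoupling ((μ Set.univ)⁻¹ • μ.prod ν) μ ν := by
  rcases eq_or_ne (μ Set.univ) 0 with h₀ | h₀
  · obtain rfl : μ = 0 := Measure.measure_univ_eq_zero.1 h₀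
    obtain rfl : ν = 0 := Measure.measure_univ_eq_zero.1 (h ▸ h₀)
    simp [IsCoupling]
  · have hinv : (μ Set.univ)⁻¹ * μ Set.univ = 1 :=
      ENNReal.inv_mul_cancel h₀ (measure_ne_top μ _)
    constructor
    · rw [Measure.map_smul, Measure.map_fst_prod, ← h, smul_smul, hinv, one_smul]
    · rw [Measure.map_smul, Measure.map_snd_prod, smul_smul, hinv, one_smul]

lemma exists_isCoupling_add [IsFiniteMeasure μ] [IsFiniteMeasure ν]
    (hmass : μ Set.univ = ν Set.univ) (hfst : γ.map Prod.fst ≤ μ) (hsnd : γ.map Prod.snd ≤ ν) :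
    ∃ γ', IsCoupling γ' (μ - γ.map Prod.fst) (ν - γ.map Prod.snd) ∧ IsCoupling (γ + γ') μ ν := by
  have : IsFiniteMeasure (γ.map Prod.fst) := isFiniteMeasure_of_le μ hfst
  have : IsFiniteMeasure (γ.map Prod.snd) := isFiniteMeasure_of_le ν hsnd
  have hrest : (μ - γ.map Prod.fst) Set.univ = (ν - γ.map Prod.snd) Set.univ := by
    rw [Measure.sub_apply .univ hfst, Measure.sub_apply .univ hsnd, hmass,
      Measure.map_apply measurable_fst .univ, Measure.map_apply measurable_snd .univ,
      Set.preimage_univ, Set.preimage_univ]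
  have hγ' := isCoupling_inv_smul_prod hrest
  refine ⟨_, hγ', ?_⟩
  have hadd := IsCoupling.add (γ := γ) ⟨rfl, rfl⟩ hγ'
  rwa [add_comm (γ.map Prod.fst), add_comm (γ.map Prod.snd),
    Measure.sub_add_cancel_of_le hfst, Measure.sub_add_cancel_of_le hsnd] at hadd

end Coupling

section TransportCost

variable {X : Type*} [PseudoMetricSpace X] [MeasurableSpace X] {μ ν : Measure X}

lemma W1_dist_nonneg (μ ν : Measure X) : 0 ≤ W1 dist μ ν :=
  Real.sInf_nonneg <| by
    rintro _ ⟨γ, -, -, rfl⟩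
    exact integral_nonneg fun _ => dist_nonneg

lemma lintegral_edist_le_of_le {ρ : Measure X} (hρ : ρ ≤ μ) (o : X) (R : NNReal) :
    ∫⁻ x, edist x o ∂ρ ≤ R * ρ Set.univ + ∫⁻ x, (edist x o - R) ∂μ :=
  calc ∫⁻ x, edist x o ∂ρ
      ≤ ∫⁻ x, (R + (edist x o - R)) ∂ρ := lintegral_mono fun _ => le_add_tsub
    _ = R * ρ Set.univ + ∫⁻ x, (edist x o - R) ∂ρ := by
        rw [lintegral_add_left measurable_const, lintegral_const]
    _ ≤ R * ρ Set.univ + ∫⁻ x, (edist x o - R) ∂μ := by gcongr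

variable [OpensMeasurableSpace X]

lemma IsCoupling.lintegral_edist_le {γ : Measure (X × X)} (hγ : IsCoupling γ μ ν) (o : X) :
    ∫⁻ q, edist q.1 q.2 ∂γ ≤ ∫⁻ x, edist x o ∂μ + ∫⁻ x, edist x o ∂ν := by
  have ho : Measurable fun x : X => edist x o := by fun_prop
  calc ∫⁻ q, edist q.1 q.2 ∂γ
      ≤ ∫⁻ q, (edist q.1 o + edist q.2 o) ∂γ :=
        lintegral_mono fun q => edist_triangle_right _ _ _
    _ = ∫⁻ x, edist x o ∂μ + ∫⁻ x, edist x o ∂ν := by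
        rw [lintegral_add_left (by fun_prop), ← hγ.1, ← hγ.2,
          lintegral_map ho measurable_fst, lintegral_map ho measurable_snd]

variable [SecondCountableTopology X]

lemma IsCoupling.ofReal_W1_dist_le {γ : Measure (X × X)} (hγ : IsCoupling γ μ ν) :
    ENNReal.ofReal (W1 dist μ ν) ≤ ∫⁻ q, edist q.1 q.2 ∂γ := by
  rcases eq_or_ne (∫⁻ q, edist q.1 q.2 ∂γ) ∞ with htop | hfin
  · simp [htop]
  have hint : Integrable (fun q : X × X => dist q.1 q.2) γ := by
    refine ⟨(by fun_prop : Continuous _).aestronglyMeasurable, ?_⟩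
    simpa only [hasFiniteIntegral_iff_ofReal (ae_of_all _ fun _ => dist_nonneg), ← edist_dist]
      using hfin.lt_top
  have hle : W1 dist μ ν ≤ ∫ q, dist q.1 q.2 ∂γ := by
    refine csInf_le ⟨0, ?_⟩ ⟨γ, hγ, hint, rfl⟩
    rintro _ ⟨γ', -, -, rfl⟩
    exact integral_nonneg fun _ => dist_nonneg
  calc ENNReal.ofReal (W1 dist μ ν)
      ≤ ENNReal.ofReal (∫ q, dist q.1 q.2 ∂γ) := ENNReal.ofReal_le_ofReal hle
    _ = ∫⁻ q, edist q.1 q.2 ∂γ := by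
        simp_rw [ofReal_integral_eq_lintegral_ofReal hint (ae_of_all _ fun _ => dist_nonneg),
          edist_dist]

lemma ofReal_W1_dist_le_of_map_le [IsFiniteMeasure μ] [IsFiniteMeasure ν]
    (hmass : μ Set.univ = ν Set.univ) {γ : Measure (X × X)}
    (hfst : γ.map Prod.fst ≤ μ) (hsnd : γ.map Prod.snd ≤ ν) (o : X) (R : NNReal) :
    ENNReal.ofReal (W1 dist μ ν) ≤ ∫⁻ q, edist q.1 q.2 ∂γ
      + 2 * R * (μ Set.univ - γ Set.univ)
      + (∫⁻ x, (edist x o - R) ∂μ + ∫⁻ x, (edist x o - R) ∂ν) := by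
  have : IsFiniteMeasure (γ.map Prod.fst) := isFiniteMeasure_of_le μ hfst
  have : IsFiniteMeasure (γ.map Prod.snd) := isFiniteMeasure_of_le ν hsnd
  have hμ_rest : (μ - γ.map Prod.fst) Set.univ = μ Set.univ - γ Set.univ := by
    rw [Measure.sub_apply .univ hfst, Measure.map_apply measurable_fst .univ, Set.preimage_univ]
  have hν_rest : (ν - γ.map Prod.snd) Set.univ = μ Set.univ - γ Set.univ := by
    rw [Measure.sub_apply .univ hsnd, Measure.map_apply measurable_snd .univ, Set.preimage_univ,
      hmass]
  obtain ⟨γ', hγ', hsum⟩ := exists_isCoupling_add hmass hfst hsnd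
  have hcost : ∫⁻ q, edist q.1 q.2 ∂γ' ≤
      R * (μ Set.univ - γ Set.univ) + ∫⁻ x, (edist x o - R) ∂μ
        + (R * (μ Set.univ - γ Set.univ) + ∫⁻ x, (edist x o - R) ∂ν) := by
    refine (hγ'.lintegral_edist_le o).trans (add_le_add ?_ ?_)
    · exact hμ_rest ▸ lintegral_edist_le_of_le Measure.sub_le o R
    · exact hν_rest ▸ lintegral_edist_le_of_le Measure.sub_le o R
  calc ENNReal.ofReal (W1 dist μ ν)
      ≤ ∫⁻ q, edist q.1 q.2 ∂γ + ∫⁻ q, edist q.1 q.2 ∂γ' := by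
        simpa only [lintegral_add_measure] using hsum.ofReal_W1_dist_le
    _ ≤ _ := by grw [hcost]
    _ = _ := by ring

end TransportCost

section BlockCoupling

variable {X : Type*} [MeasurableSpace X]

/-- The partial coupling of `μ` and `ν` that couples them independently inside each cell `A k` of
a partition. The weights are the largest ones keeping the marginals below `μ` and `ν`; on a cell
null for both measures the weight is `0⁻¹ = ∞`, which multiplies the zero measure. -/
noncomputable def blockCoupling (A : ℕ → Set X) (μ ν : Measure X) : Measure (X × X) :=
  Measure.sum fun k => (max (μ (A k)) (ν (A k)))⁻¹ • (μ.restrict (A k)).prod (ν.restrict (A k))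

variable {A : ℕ → Set X} {μ ν : Measure X}

lemma blockCoupling_map_swap (A : ℕ → Set X) (μ ν : Measure X) [SFinite μ] [SFinite ν] :
    (blockCoupling A μ ν).map Prod.swap = blockCoupling A ν μ := by
  simp_rw [blockCoupling, Measure.map_sum measurable_swap.aemeasurable, Measure.map_smul,
    Measure.prod_swap, max_comm]

lemma blockCoupling_map_fst_le [SFinite ν] (hmeas : ∀ k, MeasurableSet (A k))
    (hdisj : Pairwise (Function.onFun Disjoint A)) : (blockCoupling A μ ν).map Prod.fst ≤ μ :=
  calc (blockCoupling A μ ν).map Prod.fst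
      = Measure.sum fun k =>
          ((max (μ (A k)) (ν (A k)))⁻¹ * ν (A k)) • μ.restrict (A k) := by
        simp_rw [blockCoupling, Measure.map_sum measurable_fst.aemeasurable, Measure.map_smul,
          Measure.map_fst_prod, Measure.restrict_apply_univ, smul_smul]
    _ ≤ Measure.sum fun k => μ.restrict (A k) := by
        refine Measure.le_iff.2 fun s hs => ?_
        simp only [Measure.sum_apply _ hs, Measure.smul_apply, smul_eq_mul]
        refine ENNReal.tsum_le_tsum fun k => mul_le_of_le_one_left zero_le ?_
        grw [le_max_right (μ (A k)) (ν (A k))]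
        exact ENNReal.inv_mul_le_one _
    _ = μ.restrict (⋃ k, A k) := (Measure.restrict_iUnion hdisj hmeas).symm
    _ ≤ μ := Measure.restrict_le_self

lemma blockCoupling_map_snd_le [SFinite μ] [SFinite ν] (hmeas : ∀ k, MeasurableSet (A k))
    (hdisj : Pairwise (Function.onFun Disjoint A)) : (blockCoupling A μ ν).map Prod.snd ≤ ν := by
  have hswap : (blockCoupling A μ ν).map Prod.snd = (blockCoupling A ν μ).map Prod.fst := by
    rw [← blockCoupling_map_swap A ν μ, Measure.map_map measurable_snd measurable_swap]
    rfl
  exact hswap ▸ blockCoupling_map_fst_le hmeas hdisj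

lemma inv_max_mul_mul_eq_min {a b : ℝ≥0∞} (ha : a ≠ ∞) (hb : b ≠ ∞) :
    (max a b)⁻¹ * (a * b) = min a b := by
  rcases eq_or_ne (max a b) 0 with h₀ | h₀
  · have ha₀ : a = 0 := le_zero_iff.1 (h₀ ▸ le_max_left a b)
    simp [ha₀]
  · rw [← max_mul_min a b, ENNReal.inv_mul_cancel_left h₀ (max_lt ha.lt_top hb.lt_top).ne]

lemma blockCoupling_univ (A : ℕ → Set X) (μ ν : Measure X) [IsFiniteMeasure μ]
    [IsFiniteMeasure ν] :
    blockCoupling A μ ν Set.univ = ∑' k, min (μ (A k)) (ν (A k)) := by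
  rw [blockCoupling, Measure.sum_apply _ .univ]
  refine tsum_congr fun k => ?_
  rw [Measure.smul_apply, smul_eq_mul, ← Set.univ_prod_univ, Measure.prod_prod,
    Measure.restrict_apply_univ, Measure.restrict_apply_univ,
    inv_max_mul_mul_eq_min (measure_ne_top μ _) (measure_ne_top ν _)]

lemma lintegral_edist_blockCoupling_le [PseudoMetricSpace X] [SFinite μ] [SFinite ν] {ε : ℝ≥0∞}
    (hmeas : ∀ k, MeasurableSet (A k)) (hdiam : ∀ k, Metric.ediam (A k) ≤ ε) :
    ∫⁻ q, edist q.1 q.2 ∂(blockCoupling A μ ν) ≤ ε * blockCoupling A μ ν Set.univ := by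
  have hae : ∀ᵐ q ∂(blockCoupling A μ ν), edist q.1 q.2 ≤ ε := by
    refine Measure.ae_sum_iff.2 fun k => Measure.ae_smul_measure ?_ _
    rw [Measure.prod_restrict]
    exact ae_restrict_of_forall_mem ((hmeas k).prod (hmeas k)) fun q hq =>
      (Metric.edist_le_ediam_of_mem hq.1 hq.2).trans (hdiam k)
  exact (lintegral_mono_ae hae).trans_eq (lintegral_const ε)

end BlockCoupling

section NullFrontierPartition

lemma measure_frontier_sdiff_eq_zero {X : Type*} [TopologicalSpace X] [MeasurableSpace X]
    {ν : Measure X} {s t : Set X} (hs : ν (frontier s) = 0) (ht : ν (frontier t) = 0) :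
    ν (frontier (s \ t)) = 0 := by
  refine measure_mono_null (t := frontier s ∪ frontier t) ?_ (measure_union_null hs ht)
  grw [Set.sdiff_eq, frontier_inter_subset, frontier_compl]
  exact Set.union_subset_union Set.inter_subset_left Set.inter_subset_right

variable {X : Type*} [PseudoMetricSpace X] [MeasurableSpace X] [OpensMeasurableSpace X]

lemma exists_partition_measure_frontier_eq_zero [TopologicalSpace.SeparableSpace X]
    (ν : Measure X) [SFinite ν] {δ : ℝ} (hδ : 0 < δ) :
    ∃ A : ℕ → Set X, (∀ k, MeasurableSet (A k)) ∧ (∀ k, Metric.ediam (A k) ≤ 2 * ENNReal.ofReal δ) ∧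
      (⋃ k, A k) = Set.univ ∧ Pairwise (Function.onFun Disjoint A) ∧
      ∀ k, ν (frontier (A k)) = 0 := by
  rcases isEmpty_or_nonempty X with hX | hX
  · exact ⟨fun _ => ∅, by simp [Pairwise, Set.eq_empty_of_isEmpty]⟩
  choose r hr hnull using fun k =>
    exists_null_frontier_thickening ν {TopologicalSpace.denseSeq X k} (half_lt_self hδ)
  simp only [Metric.thickening_singleton] at hnull
  set B : ℕ → Set X := fun k => Metric.ball (TopologicalSpace.denseSeq X k) (r k)
  refine ⟨disjointed B, .disjointed fun k => Metric.isOpen_ball.measurableSet, fun k => ?_, ?_,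
    disjoint_disjointed B,
    fun k => disjointedRec (f := B) (p := fun t => ν (frontier t) = 0)
      (fun _ j ht => measure_frontier_sdiff_eq_zero ht (hnull j)) (hnull k)⟩
  · calc Metric.ediam (disjointed B k)
        ≤ Metric.ediam (Metric.eball (TopologicalSpace.denseSeq X k) (ENNReal.ofReal δ)) := by
          rw [Metric.eball_ofReal]
          exact Metric.ediam_mono ((disjointed_le B k).trans (Metric.ball_subset_ball (hr k).2.le))
      _ ≤ 2 * ENNReal.ofReal δ := Metric.ediam_eball_le
  · rw [iUnion_disjointed, Set.eq_univ_iff_forall]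
    intro x
    obtain ⟨k, hk⟩ := (TopologicalSpace.denseRange_denseSeq X).exists_dist_lt x (half_pos hδ)
    exact Set.mem_iUnion.2 ⟨k, hk.trans (hr k).1⟩

end NullFrontierPartition

section WeakConvergence

variable {X : Type*} [PseudoMetricSpace X] [MeasurableSpace X] [OpensMeasurableSpace X]

lemma tendsto_tsum_min_measure {ι : Type*} {l : Filter ι} [l.IsCountablyGenerated]
    {μ : ι → ProbabilityMeasure X} {ν : ProbabilityMeasure X} (hlim : Tendsto μ l (𝓝 ν))
    {A : ℕ → Set X} (hmeas : ∀ k, MeasurableSet (A k)) (huniv : ⋃ k, A k = Set.univ)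
    (hdisj : Pairwise (Function.onFun Disjoint A))
    (hnull : ∀ k, (ν : Measure X) (frontier (A k)) = 0) :
    Tendsto (fun i => ∑' k, min ((μ i : Measure X) (A k)) ((ν : Measure X) (A k))) l (𝓝 1) := by
  have hsum : ∑' k, (ν : Measure X) (A k) = 1 := by
    rw [← measure_iUnion hdisj hmeas, huniv, measure_univ]
  have hcell (k : ℕ) :
      Tendsto (fun i => min ((μ i : Measure X) (A k)) ((ν : Measure X) (A k))) l
        (𝓝 ((ν : Measure X) (A k))) := by
    simpa using (ProbabilityMeasure.tendsto_measure_of_null_frontier_of_tendsto' hlim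
      (hnull k)).min (tendsto_const_nhds (x := (ν : Measure X) (A k)))
  simp_rw [← lintegral_count] at hsum ⊢
  rw [← hsum]
  exact tendsto_lintegral_filter_of_dominated_convergence _
    (.of_forall fun _ => measurable_from_nat) (.of_forall fun _ => ae_of_all _ fun _ =>
      min_le_right _ _) (by simp [hsum]) (ae_of_all _ hcell)

lemma lintegral_ofReal_le_of_tendsto {μ : ℕ → ProbabilityMeasure X}
    {ν : ProbabilityMeasure X} (hlim : Tendsto μ atTop (𝓝 ν)) {f : X → ℝ} (hf : Continuous f)
    (hf₀ : 0 ≤ f) {C : ℝ≥0∞} (hC : ∀ n, ∫⁻ x, ENNReal.ofReal (f x) ∂(μ n : Measure X) ≤ C) :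
    ∫⁻ x, ENNReal.ofReal (f x) ∂(ν : Measure X) ≤ C :=
  calc ∫⁻ x, ENNReal.ofReal (f x) ∂(ν : Measure X)
      ≤ liminf (fun n => ∫⁻ x, ENNReal.ofReal (f x) ∂(μ n : Measure X)) atTop :=
        lintegral_le_liminf_lintegral_of_forall_isOpen_measure_le_liminf_measure hf hf₀
          fun _ hG => ProbabilityMeasure.le_liminf_measure_open_of_tendsto hlim hG
    _ ≤ C := liminf_le_of_frequently_le' (.of_forall hC)

lemma lintegral_edist_tsub_le_of_tendsto {μ : ℕ → ProbabilityMeasure X}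
    {ν : ProbabilityMeasure X} (hlim : Tendsto μ atTop (𝓝 ν)) {o : X} {R : NNReal} {C : ℝ≥0∞}
    (hC : ∀ n, ∫⁻ x, (edist x o - R) ∂(μ n : Measure X) ≤ C) :
    ∫⁻ x, (edist x o - R) ∂(ν : Measure X) ≤ C := by
  have htrunc (x : X) : edist x o - R = ENNReal.ofReal (max (dist x o - R) 0) := by
    rw [edist_dist, ← ENNReal.ofReal_coe_nnreal, ← ENNReal.ofReal_sub _ R.coe_nonneg]
    simp
  simp only [htrunc] at hC ⊢
  exact lintegral_ofReal_le_of_tendsto hlim (f := fun x => max (dist x o - R) 0) (by fun_prop)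
    (fun _ => le_max_right _ _) hC

end WeakConvergence

section UniformIntegrability

variable {X : Type*} [PseudoMetricSpace X]

lemma edist_le_ofReal_rpow_mul_edist_rpow {x o : X} {p R : ℝ} (hp : 1 ≤ p)
    (hR : 0 < R) (hx : R ≤ dist x o) :
    edist x o ≤ ENNReal.ofReal (R ^ (1 - p)) * edist x o ^ p := by
  have hpos : 0 < dist x o := hR.trans_le hx
  rw [edist_dist, ENNReal.ofReal_rpow_of_pos hpos, ← ENNReal.ofReal_mul (by positivity)]
  refine ENNReal.ofReal_le_ofReal ?_
  calc dist x o = dist x o ^ (1 - p) * dist x o ^ p := by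
        rw [← Real.rpow_add hpos, sub_add_cancel, Real.rpow_one]
    _ ≤ R ^ (1 - p) * dist x o ^ p := by
        gcongr ?_ * _
        exact Real.rpow_le_rpow_of_nonpos hR hx (sub_nonpos.2 hp)

variable [MeasurableSpace X] {ι : Type*}

/-- Uniform integrability, under a family of measures, of the distance to the base point `o`: its
tail integrals vanish uniformly. Mathlib's `UnifIntegrable` concerns instead a family of functions
under one measure. -/
def UnifIntegrableDist (μ : ι → Measure X) (o : X) : Prop :=
  Tendsto (fun R : ℝ => ⨆ i, ∫⁻ x in {x | R < dist x o}, edist x o ∂(μ i)) atTop (𝓝 0)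

variable {μ : ι → Measure X} {o : X}

lemma UnifIntegrableDist.comp {κ : Type*} (h : UnifIntegrableDist μ o) (φ : κ → ι) :
    UnifIntegrableDist (μ ∘ φ) o :=
  tendsto_of_tendsto_of_tendsto_of_le_of_le tendsto_const_nhds h (fun _ => zero_le) fun R =>
    iSup_comp_le (fun i => ∫⁻ x in {x | R < dist x o}, edist x o ∂(μ i)) φ

lemma UnifIntegrableDist.exists_lintegral_edist_tsub_le (h : UnifIntegrableDist μ o)
    {ε : ℝ≥0∞} (hε : 0 < ε) :
    ∃ R : NNReal, ∀ i, ∫⁻ x, (edist x o - R) ∂(μ i) ≤ ε := by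
  obtain ⟨R, htail, hR⟩ :=
    ((ENNReal.tendsto_nhds_zero.1 h ε hε).and (eventually_ge_atTop 0)).exists
  lift R to NNReal using hR
  refine ⟨R, fun i => ?_⟩
  have hindicator (x : X) :
      edist x o - R ≤ {x | R < dist x o}.indicator (fun x => edist x o) x := by
    rcases lt_or_ge (R : ℝ) (dist x o) with hx | hx
    · rw [Set.indicator_of_mem (s := {x | R < dist x o}) hx]
      exact tsub_le_self
    · rw [tsub_eq_zero_of_le (by rw [edist_nndist]; exact_mod_cast hx)]
      exact zero_le
  calc ∫⁻ x, (edist x o - R) ∂(μ i)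
      ≤ ∫⁻ x, {x | R < dist x o}.indicator (fun x => edist x o) x ∂(μ i) :=
        lintegral_mono hindicator
    _ ≤ ∫⁻ x in {x | R < dist x o}, edist x o ∂(μ i) := lintegral_indicator_le _ _
    _ ≤ ε := iSup_le_iff.1 htail i

lemma unifIntegrableDist_of_lintegral_edist_rpow_le [OpensMeasurableSpace X] {p : ℝ}
    (hp : 1 < p) {C : ℝ≥0∞} (hC : C ≠ ∞) (hμ : ∀ i, ∫⁻ x, edist x o ^ p ∂(μ i) ≤ C) :
    UnifIntegrableDist μ o := by
  have hdecay : Tendsto (fun R : ℝ => ENNReal.ofReal (R ^ (1 - p)) * C) atTop (𝓝 0) := by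
    have hrpow : Tendsto (fun R : ℝ => R ^ (1 - p)) atTop (𝓝 0) := by
      simpa only [neg_sub] using tendsto_rpow_neg_atTop (sub_pos.2 hp)
    simpa using ENNReal.Tendsto.mul_const (ENNReal.tendsto_ofReal hrpow) (.inr hC)
  refine tendsto_of_tendsto_of_tendsto_of_le_of_le' tendsto_const_nhds hdecay
    (.of_forall fun _ => zero_le) ?_
  filter_upwards [eventually_gt_atTop 0] with R hR
  refine iSup_le fun i => ?_
  have hmeas : MeasurableSet {x | R < dist x o} :=
    (isOpen_lt continuous_const (by fun_prop)).measurableSet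
  calc ∫⁻ x in {x | R < dist x o}, edist x o ∂(μ i)
      ≤ ∫⁻ x in {x | R < dist x o}, ENNReal.ofReal (R ^ (1 - p)) * edist x o ^ p ∂(μ i) :=
        setLIntegral_mono' hmeas fun x hx =>
          edist_le_ofReal_rpow_mul_edist_rpow hp.le hR (le_of_lt hx)
    _ ≤ ∫⁻ x, ENNReal.ofReal (R ^ (1 - p)) * edist x o ^ p ∂(μ i) := setLIntegral_le_lintegral _ _
    _ ≤ ENNReal.ofReal (R ^ (1 - p)) * C := by
        rw [lintegral_const_mul' _ _ ENNReal.ofReal_ne_top]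
        gcongr
        exact hμ i

end UniformIntegrability

section WassersteinConvergence

variable {X : Type*} [PseudoMetricSpace X] [MeasurableSpace X] [OpensMeasurableSpace X]

lemma UnifIntegrableDist.lintegral_edist_lt_top_of_tendsto {μ : ℕ → ProbabilityMeasure X}
    {ν : ProbabilityMeasure X} {o : X} (h : UnifIntegrableDist (fun n => (μ n : Measure X)) o)
    (hlim : Tendsto μ atTop (𝓝 ν)) : ∫⁻ x, edist x o ∂(ν : Measure X) < ∞ := by
  obtain ⟨R, hR⟩ := h.exists_lintegral_edist_tsub_le one_pos
  calc ∫⁻ x, edist x o ∂(ν : Measure X)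
      ≤ R * (ν : Measure X) Set.univ + ∫⁻ x, (edist x o - R) ∂(ν : Measure X) :=
        lintegral_edist_le_of_le le_rfl o R
    _ ≤ R * 1 + 1 := by
        grw [measure_univ, lintegral_edist_tsub_le_of_tendsto hlim hR]
    _ < ∞ := by finiteness

variable [SecondCountableTopology X]

lemma UnifIntegrableDist.tendsto_W1_dist {μ : ℕ → ProbabilityMeasure X}
    {ν : ProbabilityMeasure X} {o : X} (h : UnifIntegrableDist (fun n => (μ n : Measure X)) o)
    (hlim : Tendsto μ atTop (𝓝 ν)) :
    Tendsto (fun n => W1 dist (μ n : Measure X) ν) atTop (𝓝 0) := by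
  suffices hofReal : Tendsto (fun n => ENNReal.ofReal (W1 dist (μ n : Measure X) ν)) atTop (𝓝 0) by
    simpa [Function.comp_def, ENNReal.toReal_ofReal, W1_dist_nonneg] using
      (ENNReal.tendsto_toReal ENNReal.zero_ne_top).comp hofReal
  refine ENNReal.tendsto_nhds_zero.2 fun ε hε => ?_
  obtain ⟨δ, hδ, hδε⟩ : ∃ δ : NNReal, 0 < δ ∧ δ * 5 < ε :=
    ENNReal.exists_nnreal_pos_mul_lt (by simp) hε.ne'
  obtain ⟨R, hR⟩ := h.exists_lintegral_edist_tsub_le (ENNReal.coe_pos.2 hδ)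
  have hRν := lintegral_edist_tsub_le_of_tendsto hlim hR
  obtain ⟨A, hmeas, hdiam, huniv, hdisj, hnull⟩ :=
    exists_partition_measure_frontier_eq_zero (ν : Measure X) (NNReal.coe_pos.2 hδ)
  rw [ENNReal.ofReal_coe_nnreal] at hdiam
  have hdefect : Tendsto (fun n => 2 * R * (1 - blockCoupling A (μ n : Measure X) ν Set.univ))
      atTop (𝓝 0) := by
    have hmin := tendsto_tsum_min_measure hlim hmeas huniv hdisj hnull
    simp_rw [blockCoupling_univ]
    simpa using ENNReal.Tendsto.const_mul
      (ENNReal.Tendsto.sub (tendsto_const_nhds (x := 1)) hmin (by simp))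
      (.inr (by finiteness : 2 * (R : ℝ≥0∞) ≠ ∞))
  filter_upwards [ENNReal.tendsto_nhds_zero.1 hdefect δ (ENNReal.coe_pos.2 hδ)] with n hn
  have hfst : (blockCoupling A (μ n : Measure X) ν).map Prod.fst ≤ μ n :=
    blockCoupling_map_fst_le hmeas hdisj
  have hmass : blockCoupling A (μ n : Measure X) ν Set.univ ≤ 1 := by
    simpa [Measure.map_apply measurable_fst] using hfst Set.univ
  calc ENNReal.ofReal (W1 dist (μ n : Measure X) ν)
      ≤ _ := ofReal_W1_dist_le_of_map_le (by simp) hfst (blockCoupling_map_snd_le hmeas hdisj) o R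
    _ ≤ 2 * δ * 1 + δ + (δ + δ) := by
        grw [lintegral_edist_blockCoupling_le hmeas hdiam, hmass, measure_univ, hn, hR n, hRν]
    _ = δ * 5 := by ring
    _ ≤ ε := hδε.le

end WassersteinConvergence

section RelativeCompactness

lemma exists_subseq_tendsto_of_isTightMeasureSet {X : Type*} [MetricSpace X]
    [SecondCountableTopology X] [MeasurableSpace X] [BorelSpace X] {μ : ℕ → ProbabilityMeasure X}
    (h : IsTightMeasureSet (Set.range fun n => (μ n : Measure X))) :
    ∃ φ : ℕ → ℕ, StrictMono φ ∧ ∃ ν, Tendsto (μ ∘ φ) atTop (𝓝 ν) := by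
  have hcompact : IsCompact (closure (Set.range μ)) :=
    isCompact_closure_of_isTightMeasureSet (by simpa [Set.range] using h)
  obtain ⟨ν, -, φ, hφ, hlim⟩ :=
    hcompact.isSeqCompact fun n => subset_closure (Set.mem_range_self n)
  exact ⟨φ, hφ, ν, hlim⟩

lemma UnifIntegrableDist.exists_subseq_tendsto_W1_dist {X : Type*} [MetricSpace X]
    [SecondCountableTopology X] [MeasurableSpace X] [BorelSpace X] {μ : ℕ → Measure X}
    [∀ n, IsProbabilityMeasure (μ n)] {o : X} (h : UnifIntegrableDist μ o)
    (htight : IsTightMeasureSet (Set.range μ)) :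
    ∃ φ : ℕ → ℕ, StrictMono φ ∧ ∃ ν : Measure X, IsProbabilityMeasure ν ∧
      ∫⁻ x, edist x o ∂ν < ∞ ∧ Tendsto (fun k => W1 dist (μ (φ k)) ν) atTop (𝓝 0) := by
  obtain ⟨μ, rfl⟩ : ∃ P : ℕ → ProbabilityMeasure X, (fun n => (P n : Measure X)) = μ :=
    ⟨fun n => ⟨μ n, inferInstance⟩, rfl⟩
  obtain ⟨φ, hφ, ν, hlim⟩ := exists_subseq_tendsto_of_isTightMeasureSet htight
  have hφ_ui := h.comp φ
  exact ⟨φ, hφ, ν, inferInstance, hφ_ui.lintegral_edist_lt_top_of_tendsto hlim,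
    hφ_ui.tendsto_W1_dist hlim⟩

end RelativeCompactness

section MomentBounds

variable {𝕜 H W : Type*} [NontriviallyNormedField 𝕜] [SeminormedAddCommGroup H] [NormedSpace 𝕜 H]
  [MeasurableSpace H] [OpensMeasurableSpace H] [NormedAddCommGroup W] [NormedSpace 𝕜 W]
  [MeasurableSpace W] [BorelSpace W] {p : ℝ} {C : ℝ≥0∞}

lemma lintegral_enorm_rpow_map_le (ι : H →L[𝕜] W) (hp : 0 ≤ p) {μ : Measure H} :
    ∫⁻ y, ‖y‖ₑ ^ p ∂(μ.map ι) ≤ ‖ι‖ₑ ^ p * ∫⁻ x, ‖x‖ₑ ^ p ∂μ :=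
  calc ∫⁻ y, ‖y‖ₑ ^ p ∂(μ.map ι)
      = ∫⁻ x, ‖ι x‖ₑ ^ p ∂μ := lintegral_map (by fun_prop) ι.continuous.measurable
    _ ≤ ∫⁻ x, ‖ι‖ₑ ^ p * ‖x‖ₑ ^ p ∂μ := lintegral_mono fun x => by
        rw [← ENNReal.mul_rpow_of_nonneg _ _ hp]
        gcongr
        exact ι.le_opENorm x
    _ = ‖ι‖ₑ ^ p * ∫⁻ x, ‖x‖ₑ ^ p ∂μ :=
        lintegral_const_mul' _ _ (ENNReal.rpow_ne_top_of_nonneg hp enorm_ne_top)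

lemma isTightMeasureSet_map_of_isCompactOperator {ι : H →L[𝕜] W} (hι : IsCompactOperator ι)
    {α : Type*} {μ : α → Measure H} (hp : 0 < p) (hC : C ≠ ∞)
    (hμ : ∀ i, ∫⁻ x, ‖x‖ₑ ^ p ∂(μ i) ≤ C) :
    IsTightMeasureSet (Set.range fun i => (μ i).map ι) := by
  refine isTightMeasureSet_iff_exists_isCompact_measure_compl_le.2 fun ε hε => ?_
  have hdecay : Tendsto (fun R : NNReal => C / (R : ℝ≥0∞) ^ p) atTop (𝓝 0) := by
    simpa using ENNReal.Tendsto.const_div ((ENNReal.tendsto_rpow_at_top hp).comp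
      (ENNReal.tendsto_coe_nhds_top.2 tendsto_id)) (.inr hC)
  obtain ⟨R, hRε, hR⟩ :=
    ((ENNReal.tendsto_nhds_zero.1 hdecay ε hε).and (eventually_gt_atTop 0)).exists
  refine ⟨closure (ι '' Metric.closedBall 0 R),
    IsCompactOperator.isCompact_closure_image_closedBall (f := (ι : H →ₗ[𝕜] W)) hι R, ?_⟩
  rintro _ ⟨i, rfl⟩
  have hsubset :
      ι ⁻¹' (closure (ι '' Metric.closedBall 0 R))ᶜ ⊆ {x | (R : ℝ≥0∞) ^ p ≤ ‖x‖ₑ ^ p} := by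
    intro x hx
    have hball : x ∉ Metric.closedBall 0 R := fun h =>
      hx (subset_closure (Set.mem_image_of_mem ι h))
    have hnorm : R ≤ ‖x‖ₑ := by
      rw [mem_closedBall_zero_iff, not_le] at hball
      exact_mod_cast hball.le
    exact ENNReal.rpow_le_rpow hnorm hp.le
  calc (μ i).map ι (closure (ι '' Metric.closedBall 0 R))ᶜ
      = μ i (ι ⁻¹' (closure (ι '' Metric.closedBall 0 R))ᶜ) :=
        Measure.map_apply ι.continuous.measurable isClosed_closure.measurableSet.compl
    _ ≤ μ i {x | (R : ℝ≥0∞) ^ p ≤ ‖x‖ₑ ^ p} := measure_mono hsubset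
    _ ≤ (∫⁻ x, ‖x‖ₑ ^ p ∂(μ i)) / (R : ℝ≥0∞) ^ p :=
        meas_ge_le_lintegral_div (by fun_prop) (by simp [hR.ne']) (by simp [hp.le])
    _ ≤ C / (R : ℝ≥0∞) ^ p := by grw [hμ i]
    _ ≤ ε := hRε

end MomentBounds

theorem statement_3_general {𝕜 H W : Type*} [NontriviallyNormedField 𝕜]
    [SeminormedAddCommGroup H] [NormedSpace 𝕜 H] [MeasurableSpace H] [OpensMeasurableSpace H]
    [NormedAddCommGroup W] [NormedSpace 𝕜 W] [SecondCountableTopology W] [MeasurableSpace W]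
    [BorelSpace W] (ι : H →L[𝕜] W) (hι : IsCompactOperator ι) (μ : ℕ → Measure H)
    [∀ n, IsProbabilityMeasure (μ n)] {p : ℝ} (hp : 1 < p) {C : ℝ≥0∞} (hC : C ≠ ∞)
    (hmom : ∀ n, ∫⁻ x, ‖x‖ₑ ^ p ∂(μ n) ≤ C) :
    (∀ ε : ℝ, 0 < ε → ∃ K : Set W, IsCompact K ∧ ∀ n, (μ n).map ι Kᶜ ≤ ENNReal.ofReal ε) ∧
      (∀ ε : ℝ, 0 < ε → ∃ R : ℝ, 0 < R ∧
        ∀ n, ∫⁻ y in {y : W | R < ‖y‖}, ENNReal.ofReal ‖y‖ ∂((μ n).map ι) ≤ ENNReal.ofReal ε) ∧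
      (∃ φ : ℕ → ℕ, StrictMono φ ∧ ∃ ν : Measure W, IsProbabilityMeasure ν ∧
        Integrable (fun y : W => ‖y‖) ν ∧
        Tendsto (fun k => W1 dist ((μ (φ k)).map ι) ν) atTop (𝓝 0)) := by
  have hprob_map (n : ℕ) : IsProbabilityMeasure ((μ n).map ι) :=
    Measure.isProbabilityMeasure_map ι.continuous.aemeasurable
  have htight := isTightMeasureSet_map_of_isCompactOperator hι (one_pos.trans hp) hC hmom
  have hui : UnifIntegrableDist (fun n => (μ n).map ι) 0 := by
    refine unifIntegrableDist_of_lintegral_edist_rpow_le hp (C := ‖ι‖ₑ ^ p * C) ?_ fun n => ?_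
    · finiteness
    · simp_rw [edist_zero_right]
      grw [lintegral_enorm_rpow_map_le ι (by positivity), hmom n]
  refine ⟨fun ε hε => ?_, fun ε hε => ?_, ?_⟩
  · simpa using isTightMeasureSet_iff_exists_isCompact_measure_compl_le.1 htight _
      (ENNReal.ofReal_pos.2 hε)
  · obtain ⟨R, htail, hR⟩ := ((ENNReal.tendsto_nhds_zero.1 hui _
      (ENNReal.ofReal_pos.2 hε)).and (eventually_gt_atTop 0)).exists
    exact ⟨R, hR, by simpa using htail⟩
  · obtain ⟨φ, hφ, ν, hν, hfin, hlim⟩ := hui.exists_subseq_tendsto_W1_dist htight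
    refine ⟨φ, hφ, ν, hν, ⟨by fun_prop, ?_⟩, hlim⟩
    simpa [HasFiniteIntegral] using hfin

/-- Let `H` and `H₋₁` be real separable Hilbert spaces with `H` compactly
embedded in `H₋₁` via `ι`, with `‖ι x‖_{H₋₁} = ‖B^{1/2} x‖_H` for the compact square root
`B^{1/2}`. If a sequence of probability measures `(μₙ)` on `H` has uniformly bounded second
moments, then the sequence `(ι_* μₙ)`, viewed in `H₋₁`, is tight, has uniformly integrable
first moments, and hence is relatively compact in the 1-Wasserstein space `P₁(H₋₁)`. -/
theorem statement_3
    {H W : Type*}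
    [NormedAddCommGroup H] [InnerProductSpace ℝ H] [CompleteSpace H]
    [SecondCountableTopology H] [MeasurableSpace H] [BorelSpace H]
    [NormedAddCommGroup W] [InnerProductSpace ℝ W] [CompleteSpace W]
    [SecondCountableTopology W] [MeasurableSpace W] [BorelSpace W]
    -- the embedding `ι : H → H₋₁` is linear, continuous and compact
    (ι : H →L[ℝ] W) (hι_inj : Function.Injective ⇑ι) (hι_compact : IsCompactOperator ⇑ι)
    -- the square root `S = B^{1/2}` realizing the `H₋₁` norm: `‖ι x‖ = ‖S x‖`
    (S : H →L[ℝ] H) (hS_compact : IsCompactOperator ⇑S)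
    (hnorm : ∀ x : H, ‖ι x‖ = ‖S x‖)
    (μ : ℕ → Measure H) (hprob : ∀ n, IsProbabilityMeasure (μ n))
    (c : ℝ)
    (hmom : ∀ n, ∫⁻ x, ENNReal.ofReal (‖x‖ ^ 2) ∂(μ n) ≤ ENNReal.ofReal c) :
    -- tightness of the pushforwards in `H₋₁`
    (∀ ε : ℝ, 0 < ε → ∃ K : Set W, IsCompact K ∧
        ∀ n, (μ n).map ι Kᶜ ≤ ENNReal.ofReal ε) ∧
      -- uniform integrability of first moments
      (∀ ε : ℝ, 0 < ε → ∃ R : ℝ, 0 < R ∧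
        ∀ n, ∫⁻ y in {y : W | R < ‖y‖}, ENNReal.ofReal ‖y‖ ∂((μ n).map ι)
          ≤ ENNReal.ofReal ε) ∧
      -- relative compactness in `(P₁(H₋₁), d_{1,-1})`
      (∃ φ : ℕ → ℕ, StrictMono φ ∧ ∃ ν : Measure W, IsProbabilityMeasure ν ∧
        Integrable (fun y : W => ‖y‖) ν ∧
        Tendsto (fun k => W1 dist ((μ (φ k)).map ι) ν) atTop (𝓝 0)) := by
  refine statement_3_general ι hι_compact μ one_lt_two (C := ENNReal.ofReal c)
    ENNReal.ofReal_ne_top fun n => ?_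
  simpa [ENNReal.ofReal_pow] using hmom n
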